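/- Let t be a closed normal λ-term and T a closed λ-term. Then T is a storage operator for t if and only if there is a λ-term τ_t ≃β t such that, in directed λ-calculus, (T)[t]f head-reduces (by β and box reductions) to (f)τ_t[[t₁]⟨a̅₁/x̅₁⟩/y₁, …, [t_m]⟨a̅_m/x̅_m⟩/y_m], where each [tᵢ]⟨a̅ᵢ/x̅ᵢ⟩ is a box directed by a subterm tᵢ of t. -/

import Mathlib

/- Pure untyped λ-calculus with de Bruijn indices. -/

inductive Lam : Type
  | var : ℕ → Lam
  | app : Lam → Lam → Lam
  | abs : Lam → Lam
  deriving DecidableEq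

namespace Lam

/-- Renaming of free variables. -/
def rename (ρ : ℕ → ℕ) : Lam → Lam
  | var i => var (ρ i)
  | app u v => app (u.rename ρ) (v.rename ρ)
  | abs u => abs (u.rename (fun i => match i with | 0 => 0 | j+1 => ρ j + 1))

/-- Lifting of a simultaneous substitution under a binder. -/
def liftSub (σ : ℕ → Lam) : ℕ → Lam
  | 0 => var 0
  | i+1 => (σ i).rename (· + 1)

/-- Simultaneous (capture-avoiding) substitution of the free variables. -/
def subst (σ : ℕ → Lam) : Lam → Lam
  | var i => σ i
  | app u v => app (u.subst σ) (v.subst σ)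
  | abs u => abs (u.subst (liftSub σ))

/-- `u.subst0 v` is `u[v/x]` for the first variable. -/
def subst0 (u v : Lam) : Lam :=
  u.subst (fun i => match i with | 0 => v | j+1 => var j)

/-- One step of β-reduction (anywhere in the term). -/
inductive Beta : Lam → Lam → Prop
  | beta (u v : Lam) : Beta (app (abs u) v) (u.subst0 v)
  | appL {u u'} (v) : Beta u u' → Beta (app u v) (app u' v)
  | appR (u) {v v'} : Beta v v' → Beta (app u v) (app u v')
  | abs {u u'} : Beta u u' → Beta (abs u) (abs u')

/-- β-equivalence `≃β`. -/
def BetaEq : Lam → Lam → Prop := Relation.EqvGen Beta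

/-- A term is normal if it has no β-redex. -/
def Normal (t : Lam) : Prop := ∀ u, ¬ Beta t u

def IsAbs : Lam → Prop
  | abs _ => True
  | _ => False

/-- One step of head reduction: reduction of the head redex. -/
inductive HeadStep : Lam → Lam → Prop
  | beta (u v) : HeadStep (app (abs u) v) (u.subst0 v)
  | appL {u u'} (v) : ¬ u.IsAbs → HeadStep u u' → HeadStep (app u v) (app u' v)
  | abs {u u'} : HeadStep u u' → HeadStep (abs u) (abs u')

/-- `HeadRedN n u v` : `u` head-reduces to `v` in exactly `n` steps (`u ≻ v` with `n(u,v) = n`). -/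
inductive HeadRedN : ℕ → Lam → Lam → Prop
  | refl (u) : HeadRedN 0 u u
  | step {n u v w} : HeadStep u v → HeadRedN n v w → HeadRedN (n+1) u w

/-- `u ≻ v` : `v` is obtained from `u` by some head reductions. -/
def HeadRed (u v : Lam) : Prop := ∃ n, HeadRedN n u v

/-- Head normal form. -/
def HeadNF (t : Lam) : Prop := ∀ u, ¬ HeadStep t u

def ClosedUnder : ℕ → Lam → Prop
  | k, var i => i < k
  | k, app u v => ClosedUnder k u ∧ ClosedUnder k v
  | k, abs u => ClosedUnder (k+1) u

/-- Closed λ-term. -/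
def Closed (t : Lam) : Prop := ClosedUnder 0 t

/-- `(f)ⁿx` : `iterApp f n x = (f)(f)…(f)x`. -/
def iterApp (f : Lam) : ℕ → Lam → Lam
  | 0, x => x
  | n+1, x => app f (iterApp f n x)

/-- The Church integer `n̲ = λxλf(f)ⁿx`. -/
def church (n : ℕ) : Lam := abs (abs (iterApp (var 0) n (var 1)))

/-- `(t)w₁…wₖ`. -/
def appList (t : Lam) (ws : List Lam) : Lam := ws.foldl app t

/-- `T` is a storage operator for the closed normal term `t` :
there is `τ ≃β t` such that for every `θ ≃β t` there is a substitution `σ`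
(not touching the fresh variable `f`, represented by the de Bruijn index `0`)
with `(T)θf ≻ (f)σ(τ)`. -/
def IsStorageFor (T t : Lam) : Prop :=
  Closed T ∧ ∃ τ, BetaEq τ t ∧ ∀ θ, BetaEq θ t →
    ∃ σ : ℕ → Lam, σ 0 = var 0 ∧
      HeadRed (app (app T θ) (var 0)) (app (var 0) (τ.subst σ))

end Lam

/- The directed λ-calculus. -/

/-- Terms of the directed λ-calculus `Λ[□]` : λ-terms together with boxes
`[t]⟨a₁/x₁,…,aₙ/xₙ⟩` directed by a (normal) λ-term `t`, where the substitution
is represented as a function from de Bruijn indices to directed terms. -/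
inductive DT : Type
  | var : ℕ → DT
  | app : DT → DT → DT
  | abs : DT → DT
  | box : Lam → (ℕ → DT) → DT

namespace DT

def rename (ρ : ℕ → ℕ) : DT → DT
  | var i => var (ρ i)
  | app u v => app (u.rename ρ) (v.rename ρ)
  | abs u => abs (u.rename (fun i => match i with | 0 => 0 | j+1 => ρ j + 1))
  | box t as => box t (fun i => (as i).rename ρ)

def liftSub (σ : ℕ → DT) : ℕ → DT
  | 0 => var 0
  | i+1 => (σ i).rename (· + 1)

def subst (σ : ℕ → DT) : DT → DT
  | var i => σ i
  | app u v => app (u.subst σ) (v.subst σ)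
  | abs u => abs (u.subst (liftSub σ))
  | box t as => box t (fun i => (as i).subst σ)

def subst0 (u v : DT) : DT :=
  u.subst (fun i => match i with | 0 => v | j+1 => var j)

/-- The contractum of the `[□]`-redex `[t]⟨a̅/x̅⟩`, by cases on `t`. -/
def contract : Lam → (ℕ → DT) → DT
  | Lam.var i, as => as i
  | Lam.abs u, as =>
      abs (box u (fun i => match i with | 0 => var 0 | j+1 => (as j).rename (· + 1)))
  | Lam.app u v, as => app (box u as) (box v as)

def IsAbs : DT → Prop
  | abs _ => True
  | _ => False

/-- One step of `β[□]`-head reduction : reduction of the head redex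
(a β-redex or a box). -/
inductive DHead : DT → DT → Prop
  | beta (u v) : DHead (app (abs u) v) (u.subst0 v)
  | box (t : Lam) (as : ℕ → DT) : DHead (box t as) (contract t as)
  | appL {u u'} (v) : ¬ u.IsAbs → DHead u u' → DHead (app u v) (app u' v)
  | abs {u u'} : DHead u u' → DHead (abs u) (abs u')

/-- `u ≻_{β[□]} v`. -/
def DHeadRed : DT → DT → Prop := Relation.ReflTransGen DHead

end DT

/-- Embedding of λ-terms into the directed λ-calculus. -/
def Lam.toDT : Lam → DT
  | .var i => .var i
  | .app u v => .app u.toDT v.toDT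
  | .abs u => .abs u.toDT

/-- The subterm relation on λ-terms. -/
inductive Subterm : Lam → Lam → Prop
  | refl (t : Lam) : Subterm t t
  | appL {s u} (v) : Subterm s u → Subterm s (.app u v)
  | appR (u) {s v} : Subterm s v → Subterm s (.app u v)
  | abs {s u} : Subterm s u → Subterm s (.abs u)

/-!
If `θ ≃β t` and `t` is normal, then `θ` reduces to `t` by a standard reduction. Replacing every box
`[s]⟨a̅/x̅⟩` by `θ'[b̅/x̅]`, where `θ'` has a standard reduction to `s`, turns a head reduction of
`(T)[t]f` into a head reduction of `(T)θf`. Two occurrences of one box may be replaced by different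
terms, so `τ` has to be linearized first.

Conversely, put a marker `J ≃β λx x` in front of every subterm of `t`. The resulting `θ ≃β t` makes
the head reduction of `(T)θf` follow that of `(T)[t]f` step by step, so the latter ends in
`(f)τ[boxes]`, and `τ[J X₁, …, J Xₘ]` is an instance `τ₀[σ]` of the given `τ₀ ≃β t`. If `J` is
larger than `τ` and `τ₀`, then replacing `J` by `λz f` throughout gives `τ[f, …, f] ≃β t`, hence
`τ ≃β t`.
-/

open Relation

/-! ### Abstract reduction -/

section Relation

variable {α β : Type*} {r q : α → α → Prop} {a b c : α}

theorem reflTransGen_of_forall_rel_imp {p : α → Prop} (hp : ∀ a b, r a b → p b → p a)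
    (hq : ∀ a b, r a b → p a → q a b) (h : ReflTransGen r a b) (hb : p b) :
    ReflTransGen q a b := by
  suffices ReflTransGen q a b ∧ p a from this.1
  induction h using ReflTransGen.head_induction_on with
  | refl => exact ⟨.refl, hb⟩
  | head hac _ ih =>
    have ha := hp _ _ hac ih.2
    exact ⟨.head (hq _ _ hac ha) ih.1, ha⟩

theorem eq_of_reflTransGen_of_irreducible (h : ReflTransGen r a b) (ha : ∀ x, ¬ r a x) : a = b :=
  h.cases_head.resolve_right fun ⟨_, hac, _⟩ => ha _ hac

theorem eq_of_reflTransGen_of_rightUnique (hr : Relator.RightUnique r)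
    (hab : ReflTransGen r a b) (hac : ReflTransGen r a c)
    (hb : ∀ x, ¬ r b x) (hc : ∀ x, ¬ r c x) : b = c :=
  (ReflTransGen.total_of_right_unique hr hab hac).elim
    (eq_of_reflTransGen_of_irreducible · hb) (eq_of_reflTransGen_of_irreducible · hc |>.symm)

theorem acc_swap_of_rightUnique (hr : Relator.RightUnique r) (hab : ReflTransGen r a b)
    (hb : ∀ x, ¬ r b x) : Acc (Function.swap r) a := by
  induction hab using ReflTransGen.head_induction_on with
  | refl => exact ⟨_, fun x hx => absurd hx (hb x)⟩
  | head hac _ ih => exact ⟨_, fun _ hx => hr hac hx ▸ ih⟩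

theorem exists_irreducible_of_acc_map {s : β → β → Prop} (f : α → β)
    (hf : ∀ a b, r a b → TransGen s (f a) (f b)) (ha : Acc (Function.swap s) (f a)) :
    ∃ b, ReflTransGen r a b ∧ ∀ c, ¬ r b c := by
  have hacc := InvImage.accessible f ha.transGen
  clear ha
  induction hacc with
  | intro a _ ih =>
    by_cases hred : ∃ b, r a b
    · obtain ⟨b, hab⟩ := hred
      obtain ⟨c, hbc, hc⟩ := ih b (transGen_swap.2 (hf a b hab))
      exact ⟨c, .head hab hbc, hc⟩
    · exact ⟨a, .refl, not_exists.1 hred⟩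

end Relation

/-! ### Sequences and renamings -/

/-- The sequence `a, s 0, s 1, …`. Substituting `scons v var` is the `subst0` of both calculi. -/
def scons {α : Type*} (a : α) (s : ℕ → α) : ℕ → α
  | 0 => a
  | i + 1 => s i

/-- The sequence `a 0, b 0, a 1, b 1, …`, which merges two families of variables into one. -/
def interleave {α : Type*} (a b : ℕ → α) : ℕ → α :=
  Sum.elim a b ∘ Equiv.natSumNatEquivNat.symm

/-- Lifting of a renaming under a binder. -/
def up (ρ : ℕ → ℕ) : ℕ → ℕ :=
  scons 0 fun i => ρ i + 1

section Sequences

variable {α β : Type*}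

theorem comp_scons (f : α → β) (a : α) (s : ℕ → α) : f ∘ scons a s = scons (f a) (f ∘ s) := by
  funext i
  cases i <;> rfl

theorem forall_rel_scons {R : α → β → Prop} {a : α} {b : β} {s : ℕ → α} {s' : ℕ → β} (h : R a b)
    (hs : ∀ i, R (s i) (s' i)) : ∀ i, R (scons a s i) (scons b s' i)
  | 0 => h
  | i + 1 => hs i

theorem interleave_comp_even (a b : ℕ → α) : interleave a b ∘ (2 * ·) = a := by
  funext n
  exact congrArg (Sum.elim a b) (Equiv.natSumNatEquivNat.symm_apply_apply (Sum.inl n))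

theorem interleave_comp_odd (a b : ℕ → α) : interleave a b ∘ (2 * · + 1) = b := by
  funext n
  exact congrArg (Sum.elim a b) (Equiv.natSumNatEquivNat.symm_apply_apply (Sum.inr n))

theorem forall_interleave {p : α → Prop} {a b : ℕ → α} (ha : ∀ n, p (a n)) (hb : ∀ n, p (b n))
    (n : ℕ) : p (interleave a b n) := by
  unfold interleave
  rw [Function.comp_apply]
  cases Equiv.natSumNatEquivNat.symm n with
  | inl m => exact ha m
  | inr m => exact hb m

theorem scons_comp_up (a : α) (s : ℕ → α) (ρ : ℕ → ℕ) : scons a s ∘ up ρ = scons a (s ∘ ρ) := by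
  funext i
  cases i <;> rfl

theorem up_comp_up (ρ ρ' : ℕ → ℕ) : up ρ ∘ up ρ' = up (ρ ∘ ρ') := by
  funext i
  cases i <;> rfl

theorem iterate_up_comp_iterate_up (k : ℕ) (ρ ρ' : ℕ → ℕ) :
    up^[k] ρ ∘ up^[k] ρ' = up^[k] (ρ ∘ ρ') := by
  induction k with
  | zero => rfl
  | succ k ih => simp only [Function.iterate_succ_apply', up_comp_up, ih]

theorem iterate_up_of_lt (ρ : ℕ → ℕ) {i k : ℕ} (h : i < k) : up^[k] ρ i = i := by
  induction k generalizing i with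
  | zero => omega
  | succ k ih =>
    rw [Function.iterate_succ_apply']
    cases i with
    | zero => rfl
    | succ i => exact congrArg (· + 1) (ih (by omega))

theorem iterate_up_add (ρ : ℕ → ℕ) (i k : ℕ) : up^[k] ρ (i + k) = ρ i + k := by
  induction k with
  | zero => rfl
  | succ k ih =>
    rw [Function.iterate_succ_apply']
    exact congrArg (· + 1) ih

end Sequences

/-! ### Substitution in the λ-calculus -/

namespace Lam

theorem rename_abs (ρ : ℕ → ℕ) (u : Lam) : (abs u).rename ρ = abs (u.rename (up ρ)) := rfl

theorem liftSub_eq_scons (σ : ℕ → Lam) :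
    liftSub σ = scons (var 0) (rename (· + 1) ∘ σ) := by
  funext i
  cases i <;> rfl

theorem subst0_eq_subst_scons (u v : Lam) : u.subst0 v = u.subst (scons v var) := rfl

theorem liftSub_comp_up (σ : ℕ → Lam) (ρ : ℕ → ℕ) : liftSub σ ∘ up ρ = liftSub (σ ∘ ρ) := by
  funext i
  cases i <;> rfl

theorem rename_subst (M : Lam) (ρ : ℕ → ℕ) (σ : ℕ → Lam) :
    (M.rename ρ).subst σ = M.subst (σ ∘ ρ) := by
  induction M generalizing ρ σ with
  | var i => rfl
  | app u v hu hv => simp only [rename, subst, hu, hv]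
  | abs u hu => simp only [rename_abs, subst, hu, liftSub_comp_up]

theorem liftSub_var_comp (ρ : ℕ → ℕ) : liftSub (var ∘ ρ) = var ∘ up ρ := by
  funext i
  cases i <;> rfl

theorem rename_eq_subst (M : Lam) (ρ : ℕ → ℕ) : M.rename ρ = M.subst (var ∘ ρ) := by
  induction M generalizing ρ with
  | var i => rfl
  | app u v hu hv => simp only [rename, subst, hu, hv]
  | abs u hu => simp only [rename_abs, subst, hu, liftSub_var_comp]

theorem rename_rename (M : Lam) (ρ ρ' : ℕ → ℕ) :
    (M.rename ρ).rename ρ' = M.rename (ρ' ∘ ρ) := by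
  rw [rename_eq_subst _ ρ', rename_subst, Function.comp_assoc, ← rename_eq_subst]

theorem subst_var (M : Lam) : M.subst var = M := by
  induction M with
  | var i => rfl
  | app u v hu hv => simp only [subst, hu, hv]
  | abs u hu =>
    have hlift : liftSub var = var := by
      funext i
      cases i <;> rfl
    rw [subst, hlift, hu]

theorem rename_comp_liftSub (σ : ℕ → Lam) (ρ : ℕ → ℕ) :
    rename (up ρ) ∘ liftSub σ = liftSub (rename ρ ∘ σ) := by
  simp only [liftSub_eq_scons, comp_scons]
  congr 1
  funext i
  simp only [Function.comp_apply, rename_rename]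
  rfl

theorem subst_rename (M : Lam) (σ : ℕ → Lam) (ρ : ℕ → ℕ) :
    (M.subst σ).rename ρ = M.subst (rename ρ ∘ σ) := by
  induction M generalizing σ ρ with
  | var i => rfl
  | app u v hu hv => simp only [rename, subst, hu, hv]
  | abs u hu => simp only [rename_abs, subst, hu, rename_comp_liftSub]

theorem subst_comp_liftSub (σ σ' : ℕ → Lam) :
    subst (liftSub σ') ∘ liftSub σ = liftSub (subst σ' ∘ σ) := by
  rw [liftSub_eq_scons σ, comp_scons, liftSub_eq_scons (subst σ' ∘ σ)]
  congr 1
  funext i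
  simp only [Function.comp_apply, rename_subst, subst_rename]
  rfl

theorem subst_subst (M : Lam) (σ σ' : ℕ → Lam) :
    (M.subst σ).subst σ' = M.subst (subst σ' ∘ σ) := by
  induction M generalizing σ σ' with
  | var i => rfl
  | app u v hu hv => simp only [subst, hu, hv]
  | abs u hu => simp only [subst, hu, subst_comp_liftSub]

theorem subst_liftSub_subst0 (u v : Lam) (σ : ℕ → Lam) :
    (u.subst (liftSub σ)).subst0 v = u.subst (scons v σ) := by
  rw [subst0_eq_subst_scons, subst_subst, liftSub_eq_scons, comp_scons]
  congr 2
  funext i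
  exact (rename_subst _ _ _).trans (subst_var _)

theorem subst0_subst (u v : Lam) (σ : ℕ → Lam) :
    (u.subst0 v).subst σ = (u.subst (liftSub σ)).subst0 (v.subst σ) := by
  rw [subst_liftSub_subst0, subst0_eq_subst_scons, subst_subst, comp_scons]
  rfl

theorem subst0_rename (u v : Lam) (ρ : ℕ → ℕ) :
    (u.subst0 v).rename ρ = (u.rename (up ρ)).subst0 (v.rename ρ) := by
  simp only [rename_eq_subst, subst0_subst, liftSub_var_comp]

theorem iterate_liftSub_comp_iterate_up (k : ℕ) (σ : ℕ → Lam) (ρ : ℕ → ℕ) :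
    liftSub^[k] σ ∘ up^[k] ρ = liftSub^[k] (σ ∘ ρ) := by
  induction k with
  | zero => rfl
  | succ k ih => simp only [Function.iterate_succ_apply', liftSub_comp_up, ih]

theorem iterate_liftSub_of_lt (σ : ℕ → Lam) {i k : ℕ} (h : i < k) :
    liftSub^[k] σ i = var i := by
  induction k generalizing i with
  | zero => omega
  | succ k ih =>
    rw [Function.iterate_succ_apply']
    cases i with
    | zero => rfl
    | succ i => exact congrArg (rename (· + 1)) (ih (by omega))

theorem iterate_liftSub_add (σ : ℕ → Lam) (i k : ℕ) :
    liftSub^[k] σ (i + k) = (σ i).rename (· + k) := by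
  induction k with
  | zero => exact ((rename_eq_subst _ _).trans (subst_var _)).symm
  | succ k ih =>
    rw [Function.iterate_succ_apply']
    exact (congrArg (rename (· + 1)) ih).trans (rename_rename _ _ _)

theorem ClosedUnder.subst_eq_self {M : Lam} {k : ℕ} {σ : ℕ → Lam} (hM : ClosedUnder k M)
    (hσ : ∀ i < k, σ i = var i) : M.subst σ = M := by
  induction M generalizing k σ with
  | var i => exact hσ i hM
  | app u v hu hv => rw [subst, hu hM.1 hσ, hv hM.2 hσ]
  | abs u hu =>
    rw [subst, hu hM]
    rintro (_ | i) hi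
    · rfl
    · rw [liftSub, hσ i (by omega), rename]

theorem Closed.subst_eq_self {M : Lam} (hM : Closed M) (σ : ℕ → Lam) : M.subst σ = M :=
  ClosedUnder.subst_eq_self hM fun _ hi => absurd hi (Nat.not_lt_zero _)

theorem ClosedUnder.of_rename {M : Lam} {k : ℕ} {ρ : ℕ → ℕ} (hM : ClosedUnder k (M.rename ρ))
    (hρ : ∀ i, ρ i < k → i < k) : ClosedUnder k M := by
  induction M generalizing k ρ with
  | var i => exact hρ i hM
  | app u v hu hv => exact ⟨hu hM.1 hρ, hv hM.2 hρ⟩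
  | abs u hu =>
    refine hu (ρ := up ρ) hM ?_
    rintro (_ | i) hi
    · exact Nat.succ_pos k
    · exact Nat.succ_lt_succ (hρ i (Nat.lt_of_succ_lt_succ hi))

theorem Closed.of_rename {M : Lam} {ρ : ℕ → ℕ} (hM : Closed (M.rename ρ)) : Closed M :=
  ClosedUnder.of_rename hM fun _ hi => absurd hi (Nat.not_lt_zero _)

end Lam

/-! ### β-equivalence and confluence -/

namespace Lam

/-- β-reduction in any number of steps. -/
abbrev BetaRed : Lam → Lam → Prop := ReflTransGen Beta

theorem BetaEq.refl (M : Lam) : BetaEq M M := EqvGen.refl M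

theorem BetaEq.symm {M N : Lam} (h : BetaEq M N) : BetaEq N M := EqvGen.symm _ _ h

theorem BetaEq.trans {M N P : Lam} (h : BetaEq M N) (h' : BetaEq N P) : BetaEq M P :=
  EqvGen.trans _ _ _ h h'

theorem Beta.betaEq {M N : Lam} (h : Beta M N) : BetaEq M N := EqvGen.rel _ _ h

theorem BetaRed.betaEq {M N : Lam} (h : BetaRed M N) : BetaEq M N :=
  EqvGen.reflTransGen_le_eqvGen _ _ _ h

theorem BetaRed.app {u u' v v' : Lam} (hu : BetaRed u u') (hv : BetaRed v v') :
    BetaRed (app u v) (app u' v') :=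
  (ReflTransGen.lift (Lam.app · v) (fun _ _ => Beta.appL v) _ _ hu).trans
    (ReflTransGen.lift (Lam.app u') (fun _ _ => Beta.appR u') _ _ hv)

theorem BetaRed.abs {u u' : Lam} (h : BetaRed u u') : BetaRed (abs u) (abs u') :=
  ReflTransGen.lift Lam.abs (fun _ _ => Beta.abs) _ _ h

theorem BetaEq.map {f : Lam → Lam} (hf : ∀ a b, Beta a b → BetaEq (f a) (f b)) {M N : Lam}
    (h : BetaEq M N) : BetaEq (f M) (f N) := by
  induction h with
  | rel a b hab => exact hf a b hab
  | refl a => exact .refl _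
  | symm a b _ ih => exact ih.symm
  | trans a b c _ _ hab hbc => exact hab.trans hbc

theorem BetaEq.app {u u' v v' : Lam} (hu : BetaEq u u') (hv : BetaEq v v') :
    BetaEq (app u v) (app u' v') :=
  (hu.map (f := (Lam.app · v)) fun _ _ h => (h.appL v).betaEq).trans
    (hv.map (f := Lam.app u') fun _ _ h => (h.appR u').betaEq)

theorem BetaEq.abs {u u' : Lam} (h : BetaEq u u') : BetaEq (abs u) (abs u') :=
  h.map fun _ _ h => h.abs.betaEq

theorem Beta.subst {M N : Lam} (h : Beta M N) (σ : ℕ → Lam) : Beta (M.subst σ) (N.subst σ) := by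
  induction h generalizing σ with
  | beta u v =>
    rw [subst0_subst]
    exact .beta _ _
  | appL v _ ih => exact (ih σ).appL _
  | appR u _ ih => exact (ih σ).appR _
  | abs _ ih => exact (ih _).abs

theorem BetaEq.subst {M N : Lam} (h : BetaEq M N) (σ : ℕ → Lam) :
    BetaEq (M.subst σ) (N.subst σ) :=
  h.map fun _ _ h => (h.subst σ).betaEq

theorem BetaEq.rename {M N : Lam} (h : BetaEq M N) (ρ : ℕ → ℕ) :
    BetaEq (M.rename ρ) (N.rename ρ) := by
  simpa only [rename_eq_subst] using h.subst (var ∘ ρ)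

theorem forall_rel_liftSub {R : Lam → Lam → Prop} (hvar : R (var 0) (var 0))
    (hrename : ∀ M N, R M N → R (M.rename (· + 1)) (N.rename (· + 1))) {σ σ' : ℕ → Lam}
    (hσ : ∀ i, R (σ i) (σ' i)) : ∀ i, R (liftSub σ i) (liftSub σ' i) := by
  rw [liftSub_eq_scons, liftSub_eq_scons]
  exact forall_rel_scons hvar fun i => hrename _ _ (hσ i)

theorem BetaEq.subst_congr (M : Lam) {σ σ' : ℕ → Lam} (h : ∀ i, BetaEq (σ i) (σ' i)) :
    BetaEq (M.subst σ) (M.subst σ') := by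
  induction M generalizing σ σ' with
  | var i => exact h i
  | app u v hu hv => exact (hu h).app (hv h)
  | abs u hu => exact (hu (forall_rel_liftSub (.refl _) (fun _ _ h => h.rename _) h)).abs

/-- Parallel reduction in the sense of Tait and Martin-Löf, whose diamond property gives the
confluence of β-reduction. -/
inductive Par : Lam → Lam → Prop
  | var (i) : Par (var i) (var i)
  | app {u u' v v'} : Par u u' → Par v v' → Par (app u v) (app u' v')
  | abs {u u'} : Par u u' → Par (abs u) (abs u')
  | beta {u u' v v'} : Par u u' → Par v v' → Par (app (abs u) v) (u'.subst0 v')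

theorem Par.rfl {M : Lam} : Par M M := by
  induction M with
  | var i => exact .var i
  | app u v hu hv => exact .app hu hv
  | abs u hu => exact .abs hu

theorem Beta.par {M N : Lam} (h : Beta M N) : Par M N := by
  induction h with
  | beta u v => exact .beta .rfl .rfl
  | appL v _ ih => exact .app ih .rfl
  | appR u _ ih => exact .app .rfl ih
  | abs _ ih => exact .abs ih

theorem Par.betaRed {M N : Lam} (h : Par M N) : BetaRed M N := by
  induction h with
  | var i => exact .refl
  | app _ _ hu hv => exact hu.app hv
  | abs _ hu => exact hu.abs
  | beta _ _ hu hv => exact (hu.abs.app hv).tail (.beta _ _)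

theorem Par.rename {M N : Lam} (h : Par M N) (ρ : ℕ → ℕ) : Par (M.rename ρ) (N.rename ρ) := by
  induction h generalizing ρ with
  | var i => exact .var _
  | app _ _ hu hv => exact .app (hu ρ) (hv ρ)
  | abs _ hu => exact .abs (hu _)
  | beta _ _ hu hv =>
    rw [subst0_rename]
    exact .beta (hu _) (hv _)

theorem Par.subst {M N : Lam} (h : Par M N) {σ σ' : ℕ → Lam} (hσ : ∀ i, Par (σ i) (σ' i)) :
    Par (M.subst σ) (N.subst σ') := by
  have hlift {σ σ' : ℕ → Lam} : (∀ i, Par (σ i) (σ' i)) → ∀ i, Par (liftSub σ i) (liftSub σ' i) :=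
    forall_rel_liftSub (.var 0) fun _ _ h => h.rename _
  induction h generalizing σ σ' with
  | var i => exact hσ i
  | app _ _ hu hv => exact .app (hu hσ) (hv hσ)
  | abs _ hu => exact .abs (hu (hlift hσ))
  | beta _ _ hu hv =>
    rw [subst0_subst]
    exact .beta (hu (hlift hσ)) (hv hσ)

theorem Par.subst0 {u u' v v' : Lam} (hu : Par u u') (hv : Par v v') :
    Par (u.subst0 v) (u'.subst0 v') := by
  rw [subst0_eq_subst_scons, subst0_eq_subst_scons]
  exact hu.subst (forall_rel_scons hv fun i => .var i)

theorem Par.diamond {M N P : Lam} (hN : Par M N) (hP : Par M P) : Join Par N P := by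
  induction hN generalizing P with
  | var i =>
    cases hP
    exact ⟨_, .var i, .var i⟩
  | abs _ ih =>
    cases hP with
    | abs hP =>
      obtain ⟨_, hN', hP'⟩ := ih hP
      exact ⟨_, .abs hN', .abs hP'⟩
  | app hu _ ihu ihv =>
    cases hP with
    | app hPu hPv =>
      obtain ⟨_, hNu', hPu'⟩ := ihu hPu
      obtain ⟨_, hNv', hPv'⟩ := ihv hPv
      exact ⟨_, .app hNu' hNv', .app hPu' hPv'⟩
    | beta hPu hPv =>
      cases hu
      obtain ⟨_, hNu', hPu'⟩ := ihu (.abs hPu)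
      obtain ⟨_, hNv', hPv'⟩ := ihv hPv
      cases hPu' with | abs hPu' =>
      cases hNu' with | abs hNu' =>
      exact ⟨_, .beta hNu' hNv', hPu'.subst0 hPv'⟩
  | beta _ _ ihu ihv =>
    cases hP with
    | app hPu hPv =>
      cases hPu with | abs hPu =>
      obtain ⟨_, hNu', hPu'⟩ := ihu hPu
      obtain ⟨_, hNv', hPv'⟩ := ihv hPv
      exact ⟨_, hNu'.subst0 hNv', .beta hPu' hPv'⟩
    | beta hPu hPv =>
      obtain ⟨_, hNu', hPu'⟩ := ihu hPu
      obtain ⟨_, hNv', hPv'⟩ := ihv hPv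
      exact ⟨_, hNu'.subst0 hNv', hPu'.subst0 hPv'⟩

theorem reflTransGen_par : ReflTransGen Par = BetaRed :=
  le_antisymm (reflTransGen_closed fun _ _ => Par.betaRed) (ReflTransGen.mono fun _ _ => Beta.par)

theorem BetaEq.join_betaRed {M N : Lam} (h : BetaEq M N) : Join BetaRed M N := by
  have hequiv : Equivalence (Join BetaRed) := by
    rw [← reflTransGen_par]
    refine equivalence_join_reflTransGen fun a b c hab hac => ?_
    obtain ⟨d, hbd, hcd⟩ := hab.diamond hac
    exact ⟨d, .single hbd, .single hcd⟩
  induction h with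
  | rel a b h => exact ⟨b, .single h, .refl⟩
  | refl a => exact hequiv.refl a
  | symm a b _ ih => exact hequiv.symm ih
  | trans a b c _ _ hab hbc => exact hequiv.trans hab hbc

theorem BetaEq.betaRed_of_normal {M t : Lam} (h : BetaEq M t) (ht : Normal t) : BetaRed M t := by
  obtain ⟨N, hMN, htN⟩ := h.join_betaRed
  rwa [eq_of_reflTransGen_of_irreducible htN ht]

theorem Beta.exists_of_rename {M P : Lam} {ρ : ℕ → ℕ} (h : Beta (M.rename ρ) P) :
    ∃ N, Beta M N ∧ P = N.rename ρ := by
  induction M generalizing ρ P with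
  | var i => cases h
  | abs u hu =>
    cases h with | abs h =>
    obtain ⟨N, huN, rfl⟩ := hu h
    exact ⟨_, .abs huN, rfl⟩
  | app u v hu hv =>
    generalize hw : u.rename ρ = w at h
    rw [rename, hw] at h
    cases h with
    | appL _ h =>
      obtain ⟨N, huN, rfl⟩ := hu (hw ▸ h)
      exact ⟨_, .appL _ huN, rfl⟩
    | appR _ h =>
      obtain ⟨N, hvN, rfl⟩ := hv h
      exact ⟨_, .appR _ hvN, by rw [rename, hw]⟩
    | beta a _ =>
      cases u with
      | var i => cases hw
      | app _ _ => cases hw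
      | abs u =>
        cases hw
        exact ⟨_, .beta _ _, (subst0_rename _ _ _).symm⟩

theorem BetaRed.exists_of_rename {M P : Lam} {ρ : ℕ → ℕ} (h : BetaRed (M.rename ρ) P) :
    ∃ N, BetaRed M N ∧ P = N.rename ρ := by
  induction h with
  | refl => exact ⟨M, .refl, rfl⟩
  | tail _ h ih =>
    obtain ⟨N, hMN, rfl⟩ := ih
    obtain ⟨N', hNN', rfl⟩ := h.exists_of_rename
    exact ⟨N', hMN.tail hNN', rfl⟩

theorem BetaRed.of_rename {M t : Lam} {ρ : ℕ → ℕ} (ht : Closed t) (h : BetaRed (M.rename ρ) t) :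
    BetaRed M t := by
  obtain ⟨N, hMN, rfl⟩ := h.exists_of_rename
  rwa [rename_eq_subst, ht.of_rename.subst_eq_self]

/-! ### Weak head reduction and standardization -/

/-- Head reduction outside abstractions. A head reduction ending in a term that is not an
abstraction consists of such steps only. -/
inductive WeakHead : Lam → Lam → Prop
  | beta (u v) : WeakHead (app (abs u) v) (u.subst0 v)
  | appL {u u'} (v) : WeakHead u u' → WeakHead (app u v) (app u' v)

/-- Weak head reduction in any number of steps. -/
abbrev WeakHeadRed : Lam → Lam → Prop := ReflTransGen WeakHead

theorem WeakHead.rightUnique : Relator.RightUnique WeakHead := by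
  intro M N P hN hP
  induction hN generalizing P with
  | beta u v =>
    cases hP with
    | beta => rfl
    | appL _ h => cases h
  | appL v h ih =>
    cases hP with
    | beta => cases h
    | appL _ h' => rw [ih h']

theorem WeakHead.to_beta {M N : Lam} (h : WeakHead M N) : Beta M N := by
  induction h with
  | beta u v => exact .beta _ _
  | appL v _ ih => exact .appL _ ih

theorem WeakHead.headStep {M N : Lam} (h : WeakHead M N) : HeadStep M N := by
  induction h with
  | beta u v => exact .beta _ _
  | appL v h ih => exact .appL _ (by cases h <;> exact id) ih

theorem WeakHead.subst {M N : Lam} (h : WeakHead M N) (σ : ℕ → Lam) :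
    WeakHead (M.subst σ) (N.subst σ) := by
  induction h with
  | beta u v =>
    rw [subst0_subst]
    exact .beta _ _
  | appL v _ ih => exact .appL _ ih

theorem WeakHeadRed.subst {M N : Lam} (h : WeakHeadRed M N) (σ : ℕ → Lam) :
    WeakHeadRed (M.subst σ) (N.subst σ) :=
  ReflTransGen.lift (Lam.subst σ) (fun _ _ h => h.subst σ) _ _ h

theorem WeakHeadRed.rename {M N : Lam} (h : WeakHeadRed M N) (ρ : ℕ → ℕ) :
    WeakHeadRed (M.rename ρ) (N.rename ρ) := by
  simpa only [rename_eq_subst] using h.subst (var ∘ ρ)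

theorem WeakHeadRed.appL {M N : Lam} (h : WeakHeadRed M N) (v : Lam) :
    WeakHeadRed (app M v) (app N v) :=
  ReflTransGen.lift (Lam.app · v) (fun _ _ => WeakHead.appL v) _ _ h

theorem WeakHeadRed.betaEq {M N : Lam} (h : WeakHeadRed M N) : BetaEq M N :=
  BetaRed.betaEq (ReflTransGen.mono (fun _ _ => WeakHead.to_beta) _ _ h)

theorem WeakHeadRed.headRed {M N : Lam} (h : WeakHeadRed M N) : HeadRed M N := by
  induction h using ReflTransGen.head_induction_on with
  | refl => exact ⟨0, .refl _⟩
  | head h _ ih =>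
    obtain ⟨n, ih⟩ := ih
    exact ⟨n + 1, .step h.headStep ih⟩

theorem HeadRed.reflTransGen {M N : Lam} (h : HeadRed M N) : ReflTransGen HeadStep M N := by
  obtain ⟨n, h⟩ := h
  induction h with
  | refl u => exact .refl
  | step h _ ih => exact .head h ih

theorem HeadStep.weakHead {M N : Lam} (h : HeadStep M N) (hM : ¬ M.IsAbs) : WeakHead M N := by
  induction h with
  | beta u v => exact .beta _ _
  | appL v hu _ ih => exact .appL _ (ih hu)
  | abs _ _ => exact absurd trivial hM

theorem HeadStep.isAbs {M N : Lam} (h : HeadStep M N) (hM : M.IsAbs) : N.IsAbs := by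
  cases h with
  | beta => exact hM.elim
  | appL => exact hM.elim
  | abs => exact trivial

theorem HeadRed.weakHeadRed {M N : Lam} (h : HeadRed M N) (hN : ¬ N.IsAbs) : WeakHeadRed M N :=
  reflTransGen_of_forall_rel_imp (fun _ _ h => mt h.isAbs) (fun _ _ h => h.weakHead)
    h.reflTransGen hN

/-- Standard reduction, given inductively: a weak head reduction followed by standard reductions
inside the immediate subterms. -/
inductive StdRed : Lam → Lam → Prop
  | var {M i} : WeakHeadRed M (var i) → StdRed M (var i)
  | app {M u v u' v'} :
      WeakHeadRed M (app u v) → StdRed u u' → StdRed v v' → StdRed M (app u' v')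
  | abs {M u u'} : WeakHeadRed M (abs u) → StdRed u u' → StdRed M (abs u')

theorem WeakHeadRed.stdRed_of_stdRed {M N P : Lam} (hMN : WeakHeadRed M N) (hNP : StdRed N P) :
    StdRed M P := by
  cases hNP with
  | var h => exact .var (hMN.trans h)
  | app h hu hv => exact .app (hMN.trans h) hu hv
  | abs h hu => exact .abs (hMN.trans h) hu

theorem StdRed.rfl {M : Lam} : StdRed M M := by
  induction M with
  | var i => exact .var .refl
  | app u v hu hv => exact .app .refl hu hv
  | abs u hu => exact .abs .refl hu

theorem StdRed.rename {M N : Lam} (h : StdRed M N) (ρ : ℕ → ℕ) :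
    StdRed (M.rename ρ) (N.rename ρ) := by
  induction h generalizing ρ with
  | var h => exact .var (h.rename ρ)
  | app h _ _ hu hv => exact .app (h.rename ρ) (hu ρ) (hv ρ)
  | abs h _ hu => exact .abs (h.rename ρ) (hu _)

theorem StdRed.subst {M N : Lam} (h : StdRed M N) {σ σ' : ℕ → Lam}
    (hσ : ∀ i, StdRed (σ i) (σ' i)) : StdRed (M.subst σ) (N.subst σ') := by
  induction h generalizing σ σ' with
  | var h => exact (h.subst σ).stdRed_of_stdRed (hσ _)
  | app h _ _ hu hv => exact .app (h.subst σ) (hu hσ) (hv hσ)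
  | abs h _ hu =>
    exact .abs (h.subst σ) (hu (forall_rel_liftSub .rfl (fun _ _ h => h.rename _) hσ))

theorem StdRed.tail {M N P : Lam} (hMN : StdRed M N) (hNP : Beta N P) : StdRed M P := by
  induction hNP generalizing M with
  | beta u v =>
    cases hMN with | app hM hf hv =>
    cases hf with | abs hf hu =>
    refine WeakHeadRed.stdRed_of_stdRed ((hM.trans (hf.appL _)).tail (.beta _ _)) ?_
    rw [subst0_eq_subst_scons, subst0_eq_subst_scons]
    exact hu.subst (forall_rel_scons hv fun _ => .rfl)
  | appL v _ ih =>
    cases hMN with | app hM hu hv => exact .app hM (ih hu) hv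
  | appR u _ ih =>
    cases hMN with | app hM hu hv => exact .app hM hu (ih hv)
  | abs _ ih =>
    cases hMN with | abs hM hu => exact .abs hM (ih hu)

theorem BetaRed.stdRed {M N : Lam} (h : BetaRed M N) : StdRed M N := by
  induction h with
  | refl => exact .rfl
  | tail _ h ih => exact ih.tail h

end Lam

/-! ### Substitution and weak head reduction in the directed λ-calculus -/

namespace DT

theorem rename_abs (ρ : ℕ → ℕ) (u : DT) : (abs u).rename ρ = abs (u.rename (up ρ)) := rfl

theorem contract_abs (u : Lam) (as : ℕ → DT) :
    contract (.abs u) as = abs (box u (liftSub as)) := rfl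

theorem subst0_eq_subst_scons (u v : DT) : u.subst0 v = u.subst (scons v var) := rfl

theorem liftSub_eq_scons (σ : ℕ → DT) : liftSub σ = scons (var 0) (rename (· + 1) ∘ σ) := by
  funext i
  cases i <;> rfl

theorem liftSub_comp_up (σ : ℕ → DT) (ρ : ℕ → ℕ) : liftSub σ ∘ up ρ = liftSub (σ ∘ ρ) := by
  funext i
  cases i <;> rfl

theorem rename_subst (D : DT) (ρ : ℕ → ℕ) (σ : ℕ → DT) :
    (D.rename ρ).subst σ = D.subst (σ ∘ ρ) := by
  induction D generalizing ρ σ with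
  | var i => rfl
  | app u v hu hv => simp only [rename, subst, hu, hv]
  | abs u hu => simp only [rename_abs, subst, hu, liftSub_comp_up]
  | box s as ih => simp only [rename, subst, ih]

theorem liftSub_var_comp (ρ : ℕ → ℕ) : liftSub (var ∘ ρ) = var ∘ up ρ := by
  funext i
  cases i <;> rfl

theorem rename_eq_subst (D : DT) (ρ : ℕ → ℕ) : D.rename ρ = D.subst (var ∘ ρ) := by
  induction D generalizing ρ with
  | var i => rfl
  | app u v hu hv => simp only [rename, subst, hu, hv]
  | abs u hu => simp only [rename_abs, subst, hu, liftSub_var_comp]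
  | box s as ih => simp only [rename, subst, ih]

theorem rename_rename (D : DT) (ρ ρ' : ℕ → ℕ) :
    (D.rename ρ).rename ρ' = D.rename (ρ' ∘ ρ) := by
  rw [rename_eq_subst _ ρ', rename_subst, Function.comp_assoc, ← rename_eq_subst]

theorem subst_var (D : DT) : D.subst var = D := by
  induction D with
  | var i => rfl
  | app u v hu hv => simp only [subst, hu, hv]
  | abs u hu =>
    have hlift : liftSub var = var := by
      funext i
      cases i <;> rfl
    rw [subst, hlift, hu]
  | box s as ih => simp only [subst, ih]

theorem rename_zero (D : DT) : D.rename (· + 0) = D := (rename_eq_subst D _).trans (subst_var D)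

theorem iterate_liftSub_comp_iterate_up (k : ℕ) (σ : ℕ → DT) (ρ : ℕ → ℕ) :
    liftSub^[k] σ ∘ up^[k] ρ = liftSub^[k] (σ ∘ ρ) := by
  induction k with
  | zero => rfl
  | succ k ih => simp only [Function.iterate_succ_apply', liftSub_comp_up, ih]

theorem iterate_liftSub_of_lt (σ : ℕ → DT) {i k : ℕ} (h : i < k) :
    liftSub^[k] σ i = var i := by
  induction k generalizing i with
  | zero => omega
  | succ k ih =>
    rw [Function.iterate_succ_apply']
    cases i with
    | zero => rfl
    | succ i => exact congrArg (rename (· + 1)) (ih (by omega))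

theorem iterate_liftSub_add (σ : ℕ → DT) (i k : ℕ) :
    liftSub^[k] σ (i + k) = (σ i).rename (· + k) := by
  induction k with
  | zero => exact (rename_zero _).symm
  | succ k ih =>
    rw [Function.iterate_succ_apply']
    exact (congrArg (rename (· + 1)) ih).trans (rename_rename _ _ _)

theorem toDT_rename_subst (τ : Lam) (ρ : ℕ → ℕ) (σ : ℕ → DT) :
    (τ.rename ρ).toDT.subst σ = τ.toDT.subst (σ ∘ ρ) := by
  induction τ generalizing ρ σ with
  | var i => rfl
  | app u v hu hv => simp only [Lam.rename, Lam.toDT, subst, hu, hv]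
  | abs u hu => simp only [Lam.rename_abs, Lam.toDT, subst, hu, liftSub_comp_up]

/-- Head reduction of directed terms outside abstractions. -/
inductive WeakHead : DT → DT → Prop
  | beta (u v) : WeakHead (app (abs u) v) (u.subst0 v)
  | box (s : Lam) (as : ℕ → DT) : WeakHead (box s as) (contract s as)
  | appL {u u'} (v) : WeakHead u u' → WeakHead (app u v) (app u' v)

/-- Weak head reduction of directed terms in any number of steps. -/
abbrev WeakHeadRed : DT → DT → Prop := ReflTransGen WeakHead

theorem WeakHead.dHead {D E : DT} (h : WeakHead D E) : DHead D E := by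
  induction h with
  | beta u v => exact .beta _ _
  | box s as => exact .box _ _
  | appL v h ih => exact .appL _ (by cases h <;> exact id) ih

theorem WeakHeadRed.dHeadRed {D E : DT} (h : WeakHeadRed D E) : DHeadRed D E :=
  ReflTransGen.mono (fun _ _ => WeakHead.dHead) _ _ h

theorem DHead.weakHead {D E : DT} (h : DHead D E) (hD : ¬ D.IsAbs) : WeakHead D E := by
  induction h with
  | beta u v => exact .beta _ _
  | box s as => exact .box _ _
  | appL v hu _ ih => exact .appL _ (ih hu)
  | abs _ _ => exact absurd trivial hD

theorem DHead.isAbs {D E : DT} (h : DHead D E) (hD : D.IsAbs) : E.IsAbs := by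
  cases h with
  | beta => exact hD.elim
  | box => exact hD.elim
  | appL => exact hD.elim
  | abs => exact trivial

theorem DHeadRed.weakHeadRed {D E : DT} (h : DHeadRed D E) (hE : ¬ E.IsAbs) : WeakHeadRed D E :=
  reflTransGen_of_forall_rel_imp (fun _ _ h => mt h.isAbs) (fun _ _ h => h.weakHead) h hE

/-! ### From directed reduction to storage -/

/-- `Unboxing D M`: the λ-term `M` is obtained from `D` by replacing every box `[s]⟨a̅/x̅⟩` by
`θ[b̅/x̅]`, where `θ` has a standard reduction to `s` and the `bᵢ` are unboxings of the `aᵢ`.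
Different occurrences of a box may be replaced by different terms. -/
inductive Unboxing : DT → Lam → Prop
  | var (i) : Unboxing (var i) (.var i)
  | app {D E M N} : Unboxing D M → Unboxing E N → Unboxing (app D E) (.app M N)
  | abs {D M} : Unboxing D M → Unboxing (abs D) (.abs M)
  | box {s as θ bs} :
      Lam.StdRed θ s → (∀ i, Unboxing (as i) (bs i)) → Unboxing (box s as) (θ.subst bs)

theorem Unboxing.toDT (M : Lam) : Unboxing M.toDT M := by
  induction M with
  | var i => exact .var i
  | app u v hu hv => exact .app hu hv
  | abs u hu => exact .abs hu

theorem Unboxing.rename {D : DT} {M : Lam} (h : Unboxing D M) (ρ : ℕ → ℕ) :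
    Unboxing (D.rename ρ) (M.rename ρ) := by
  induction h generalizing ρ with
  | var i => exact .var _
  | app _ _ hD hE => exact .app (hD ρ) (hE ρ)
  | abs _ hD => exact .abs (hD _)
  | box hs _ ih =>
    rw [Lam.subst_rename]
    exact .box hs fun i => ih i ρ

theorem Unboxing.liftSub {σ : ℕ → DT} {σ' : ℕ → Lam} (h : ∀ i, Unboxing (σ i) (σ' i)) :
    ∀ i, Unboxing (liftSub σ i) (Lam.liftSub σ' i) := by
  rw [liftSub_eq_scons, Lam.liftSub_eq_scons]
  exact forall_rel_scons (.var 0) fun i => (h i).rename _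

theorem Unboxing.subst {D : DT} {M : Lam} (h : Unboxing D M) {σ : ℕ → DT} {σ' : ℕ → Lam}
    (hσ : ∀ i, Unboxing (σ i) (σ' i)) : Unboxing (D.subst σ) (M.subst σ') := by
  induction h generalizing σ σ' with
  | var i => exact hσ i
  | app _ _ hD hE => exact .app (hD hσ) (hE hσ)
  | abs _ hD => exact .abs (hD (Unboxing.liftSub hσ))
  | box hs _ ih =>
    rw [Lam.subst_subst]
    exact .box hs fun i => ih i hσ

theorem Unboxing.exists_of_rename {D : DT} {M : Lam} {ρ : ℕ → ℕ} (h : Unboxing (D.rename ρ) M) :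
    ∃ N : Lam, M = N.rename ρ := by
  induction D generalizing M ρ with
  | var i =>
    cases h
    exact ⟨.var i, rfl⟩
  | app u v hu hv =>
    cases h with | app h₁ h₂ =>
    obtain ⟨N₁, rfl⟩ := hu h₁
    obtain ⟨N₂, rfl⟩ := hv h₂
    exact ⟨.app N₁ N₂, rfl⟩
  | abs u hu =>
    cases h with | abs h =>
    obtain ⟨N, rfl⟩ := hu h
    exact ⟨.abs N, rfl⟩
  | box s as ih =>
    cases h with | @box _ _ θ bs hs hb =>
    choose c hc using fun i => ih i (hb i)
    refine ⟨θ.subst c, ?_⟩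
    rw [Lam.subst_rename, funext hc]
    rfl

theorem Unboxing.exists_of_weakHead {D E : DT} {M : Lam} (h : Unboxing D M) (hDE : WeakHead D E) :
    ∃ N, Lam.WeakHeadRed M N ∧ Unboxing E N := by
  induction hDE generalizing M with
  | beta u v =>
    cases h with | app hf hv =>
    cases hf with | abs hu =>
    refine ⟨_, .single (.beta _ _), ?_⟩
    rw [subst0_eq_subst_scons, Lam.subst0_eq_subst_scons]
    exact hu.subst (forall_rel_scons hv .var)
  | appL v _ ih =>
    cases h with | app hu hv =>
    obtain ⟨N, hN, hEN⟩ := ih hu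
    exact ⟨_, hN.appL _, .app hEN hv⟩
  | box s as =>
    cases h with | box hs hb =>
    cases hs with
    | var hθ => exact ⟨_, hθ.subst _, hb _⟩
    | app hθ hu hv => exact ⟨_, hθ.subst _, .app (.box hu hb) (.box hv hb)⟩
    | abs hθ hu => exact ⟨_, hθ.subst _, .abs (.box hu (Unboxing.liftSub hb))⟩

theorem Unboxing.exists_of_weakHeadRed {D E : DT} {M : Lam} (h : Unboxing D M)
    (hDE : WeakHeadRed D E) : ∃ N, Lam.WeakHeadRed M N ∧ Unboxing E N := by
  induction hDE with
  | refl => exact ⟨M, .refl, h⟩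
  | tail _ hDE ih =>
    obtain ⟨N, hMN, hN⟩ := ih
    obtain ⟨P, hNP, hP⟩ := hN.exists_of_weakHead hDE
    exact ⟨P, hMN.trans hNP, hP⟩

/-- `(T)[t]f`, the fresh variable `f` being the de Bruijn index `0`. -/
def applyToBox (T t : Lam) : DT := app (app T.toDT (box t var)) (var 0)

theorem Unboxing.applyToBox (T : Lam) {t θ : Lam} (h : Lam.StdRed θ t) :
    Unboxing (applyToBox T t) (.app (.app T θ) (.var 0)) := by
  have hθ := Unboxing.box h .var
  rw [Lam.subst_var] at hθ
  exact .app (.app (.toDT T) hθ) (.var 0)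

theorem exists_linearization (τ : Lam) (k : ℕ) :
    ∃ (τ' : Lam) (ρ : ℕ → ℕ), τ'.rename (up^[k] ρ) = τ ∧
      ∀ (σ : ℕ → DT) (M : Lam), Unboxing (τ.toDT.subst (liftSub^[k] σ)) M →
        ∃ σ' : ℕ → Lam, M = τ'.subst (Lam.liftSub^[k] σ') := by
  induction τ generalizing k with
  | var i =>
    by_cases hi : i < k
    · refine ⟨.var i, id, congrArg Lam.var (iterate_up_of_lt _ hi), fun σ M hM => ⟨Lam.var, ?_⟩⟩
      rw [Lam.toDT, subst, iterate_liftSub_of_lt _ hi] at hM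
      cases hM
      exact (Lam.iterate_liftSub_of_lt _ hi).symm
    · obtain ⟨j, rfl⟩ := Nat.exists_eq_add_of_le' (not_lt.1 hi)
      refine ⟨.var (0 + k), fun _ => j, congrArg Lam.var (iterate_up_add _ 0 k), fun σ M hM => ?_⟩
      rw [Lam.toDT, subst, iterate_liftSub_add] at hM
      obtain ⟨N, rfl⟩ := hM.exists_of_rename
      exact ⟨fun _ => N, (Lam.iterate_liftSub_add (fun _ => N) 0 k).symm⟩
  | abs u ih =>
    obtain ⟨u', ρ, hρ, hu⟩ := ih (k + 1)
    rw [Function.iterate_succ_apply'] at hρ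
    refine ⟨.abs u', ρ, congrArg Lam.abs hρ, fun σ M hM => ?_⟩
    cases hM with | abs hM =>
    rw [← Function.iterate_succ_apply' liftSub] at hM
    obtain ⟨σ', rfl⟩ := hu σ _ hM
    exact ⟨σ', by rw [Lam.subst, Function.iterate_succ_apply']⟩
  | app u v ihu ihv =>
    obtain ⟨u', ρu, rfl, hu⟩ := ihu k
    obtain ⟨v', ρv, rfl, hv⟩ := ihv k
    refine ⟨.app (u'.rename (up^[k] (2 * ·))) (v'.rename (up^[k] (2 * · + 1))),
      interleave ρu ρv, ?_, fun σ M hM => ?_⟩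
    · simp only [Lam.rename, Lam.rename_rename, iterate_up_comp_iterate_up, interleave_comp_even,
        interleave_comp_odd]
    · cases hM with | app hMu hMv =>
      obtain ⟨σu, rfl⟩ := hu σ _ hMu
      obtain ⟨σv, rfl⟩ := hv σ _ hMv
      refine ⟨interleave σu σv, ?_⟩
      simp only [Lam.subst, Lam.rename_subst, Lam.iterate_liftSub_comp_iterate_up,
        interleave_comp_even, interleave_comp_odd]

theorem isStorageFor_of_weakHeadRed {t T τ : Lam} (ht : t.Closed) (hnt : t.Normal)
    (hT : T.Closed) (hτ : τ.BetaEq t) {σ : ℕ → DT}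
    (hred : WeakHeadRed (applyToBox T t) (app (var 0) (τ.toDT.subst σ))) :
    T.IsStorageFor t := by
  obtain ⟨τ', ρ, rfl, hlin⟩ := exists_linearization τ 0
  have hτ' : τ'.BetaEq t := ((hτ.betaRed_of_normal hnt).of_rename ht).betaEq
  have hτ'_rename : (τ'.rename (· + 1)).BetaEq t := by
    simpa only [Lam.rename_eq_subst t, ht.subst_eq_self] using hτ'.rename (· + 1)
  refine ⟨hT, τ'.rename (· + 1), hτ'_rename, fun θ hθ => ?_⟩
  have hstd : Lam.StdRed θ t := (hθ.betaRed_of_normal hnt).stdRed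
  obtain ⟨N, hN, hunbox⟩ := (Unboxing.applyToBox T hstd).exists_of_weakHeadRed hred
  cases hunbox with | app hf harg =>
  cases hf
  obtain ⟨σ', rfl⟩ := hlin σ _ harg
  refine ⟨scons (.var 0) σ', rfl, ?_⟩
  rw [Lam.rename_subst]
  exact hN.headRed

end DT

/-! ### Markers -/

namespace Lam

/-- The body of `marker n`. It weak head reduces to the variable `0`, and its size exceeds `n`. -/
def markerBody : ℕ → Lam
  | 0 => var 0
  | n + 1 => app (abs (var 1)) (markerBody n)

/-- A closed term `J ≃β λx x` of size larger than `n`, to be put in front of the terms that result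
from boxes. In `markerBody` the bound variable occurs in every subterm, so that no proper instance
of an abstraction is a marker. -/
def marker (n : ℕ) : Lam := abs (markerBody n)

theorem lt_sizeOf_marker (n : ℕ) : n < sizeOf (marker n) := by
  suffices n < sizeOf (markerBody n) by
    rw [marker, abs.sizeOf_spec]
    omega
  induction n with
  | zero => simp [markerBody]
  | succ n ih =>
    rw [markerBody, app.sizeOf_spec, abs.sizeOf_spec]
    omega

theorem transGen_weakHead_app_marker (n : ℕ) (M : Lam) :
    TransGen WeakHead (app (marker n) M) M := by
  cases n with
  | zero => exact .single (.beta _ _)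
  | succ n =>
    have hM : (M.rename (· + 1)).subst0 ((markerBody n).subst0 M) = M :=
      (rename_subst _ _ _).trans (subst_var M)
    have hbody := WeakHead.beta (M.rename (· + 1)) ((markerBody n).subst0 M)
    rw [hM] at hbody
    exact .head (.beta _ _) (.single hbody)

theorem markerBody_subst_liftSub (n : ℕ) (σ : ℕ → Lam) :
    (markerBody n).subst (liftSub σ) = markerBody n := by
  induction n with
  | zero => rfl
  | succ n ih =>
    rw [markerBody, subst, ih]
    rfl

theorem rename_succ_ne_markerBody (M : Lam) (n : ℕ) : M.rename (· + 1) ≠ markerBody n := by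
  induction n generalizing M with
  | zero => cases M <;> simp [markerBody, rename]
  | succ n ih =>
    cases M with
    | app u v => exact fun h => ih v (app.inj h).2
    | _ => simp [markerBody, rename]

theorem rename_succ_ne_abs_var_one (M : Lam) : M.rename (· + 1) ≠ abs (var 1) := by
  rcases M with _ | _ | ((_ | i) | _ | _) <;> simp [rename]

theorem eq_abs_var_one_of_subst_liftSub_eq {M : Lam} {σ : ℕ → Lam}
    (h : M.subst (liftSub σ) = abs (var 1)) : M = abs (var 1) := by
  match M with
  | var 0 | app _ _ => cases h
  | var (i + 1) => exact absurd h (rename_succ_ne_abs_var_one (σ i))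
  | abs (var 0) | abs (app _ _) | abs (abs _) => cases h
  | abs (var 1) => rfl
  | abs (var (i + 2)) =>
    have hi : ((σ i).rename (· + 1)).rename (· + 1) = var 1 := abs.inj h
    cases hσ : σ i <;> simp [hσ, rename] at hi

theorem eq_markerBody_of_subst_liftSub_eq {M : Lam} {σ : ℕ → Lam} {n : ℕ}
    (h : M.subst (liftSub σ) = markerBody n) : M = markerBody n := by
  induction n generalizing M with
  | zero =>
    match M with
    | var 0 => rfl
    | var (i + 1) => exact absurd h (rename_succ_ne_markerBody (σ i) 0)
    | app _ _ | abs _ => cases h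
  | succ n ih =>
    match M with
    | var 0 | abs _ => cases h
    | var (i + 1) => exact absurd h (rename_succ_ne_markerBody (σ i) (n + 1))
    | app u v =>
      obtain ⟨hu, hv⟩ := app.inj h
      rw [markerBody, eq_abs_var_one_of_subst_liftSub_eq hu, ih hv]

theorem abs_subst_eq_marker_iff {u : Lam} {σ : ℕ → Lam} {n : ℕ} :
    (abs u).subst σ = marker n ↔ abs u = marker n := by
  constructor
  · intro h
    exact congrArg abs (eq_markerBody_of_subst_liftSub_eq (abs.inj h))
  · intro h
    rw [h, marker, subst, markerBody_subst_liftSub]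

theorem abs_rename_eq_marker_iff {u : Lam} {ρ : ℕ → ℕ} {n : ℕ} :
    (abs u).rename ρ = marker n ↔ abs u = marker n := by
  rw [rename_eq_subst, abs_subst_eq_marker_iff]

theorem marker_subst (n : ℕ) (σ : ℕ → Lam) : (marker n).subst σ = marker n :=
  abs_subst_eq_marker_iff.2 rfl

/-- `t` with a marker in front of every subterm. -/
def mark (n : ℕ) : Lam → Lam
  | var i => app (marker n) (var i)
  | app u v => app (marker n) (app (mark n u) (mark n v))
  | abs u => app (marker n) (abs (mark n u))

theorem mark_betaEq (n : ℕ) (M : Lam) : BetaEq (M.mark n) M := by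
  have happ (N : Lam) : BetaEq (app (marker n) N) N :=
    WeakHeadRed.betaEq (transGen_weakHead_app_marker n N).to_reflTransGen
  induction M with
  | var i => exact happ _
  | app u v hu hv => exact (happ _).trans (hu.app hv)
  | abs u hu => exact (happ _).trans hu.abs

/-- Replaces every marker `marker n` by `λz x`, where `x` is the variable of index `k`. -/
def eraseMarkers (n : ℕ) : ℕ → Lam → Lam
  | _, var i => var i
  | k, app u v => app (eraseMarkers n k u) (eraseMarkers n k v)
  | k, abs u => if abs u = marker n then abs (var (k + 1)) else abs (eraseMarkers n (k + 1) u)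

theorem eraseMarkers_rename (n k : ℕ) (M : Lam) (ρ : ℕ → ℕ) :
    eraseMarkers n (ρ k) (M.rename ρ) = (eraseMarkers n k M).rename ρ := by
  induction M generalizing k ρ with
  | var i => rfl
  | app u v hu hv => simp only [rename, eraseMarkers, hu, hv]
  | abs u hu =>
    have hmarker : abs (u.rename (up ρ)) = marker n ↔ abs u = marker n := abs_rename_eq_marker_iff
    rw [rename_abs, eraseMarkers, eraseMarkers, apply_ite (rename ρ)]
    exact if_congr hmarker rfl (congrArg abs (hu (k + 1) (up ρ)))

theorem eraseMarkers_subst {n : ℕ} {M : Lam} (hM : sizeOf M ≤ n) (k : ℕ) (σ : ℕ → Lam) :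
    eraseMarkers n k (M.subst σ) = M.subst (eraseMarkers n k ∘ σ) := by
  induction M generalizing k σ with
  | var i => rfl
  | app u v hu hv =>
    rw [app.sizeOf_spec] at hM
    simp only [subst, eraseMarkers, hu (by omega), hv (by omega)]
  | abs u hu =>
    have hmarker : abs (u.subst (liftSub σ)) ≠ marker n := by
      intro h
      have hu := abs_subst_eq_marker_iff.1 h
      exact absurd (lt_sizeOf_marker n) (by rw [← hu]; omega)
    have hlift : eraseMarkers n (k + 1) ∘ liftSub σ = liftSub (eraseMarkers n k ∘ σ) := by
      rw [liftSub_eq_scons, liftSub_eq_scons, comp_scons]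
      congr 1
      funext i
      exact eraseMarkers_rename n k (σ i) (· + 1)
    rw [abs.sizeOf_spec] at hM
    rw [subst, eraseMarkers, if_neg hmarker, hu (by omega), hlift, subst]

theorem eraseMarkers_app_marker_betaEq (n k : ℕ) (M : Lam) :
    BetaEq (eraseMarkers n k (app (marker n) M)) (var k) := by
  have hmarker : eraseMarkers n k (marker n) = abs (var (k + 1)) := if_pos rfl
  rw [eraseMarkers, hmarker]
  exact (Beta.beta _ _).betaEq

end Lam

namespace DT

/-- The λ-term obtained from `D` by replacing every box `[s]⟨a̅/x̅⟩` by `s[a̅/x̅]`, with a marker in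
front of every subterm of `s`. -/
def mark (n : ℕ) : DT → Lam
  | var i => .var i
  | app u v => .app (mark n u) (mark n v)
  | abs u => .abs (mark n u)
  | box s as => (s.mark n).subst fun i => mark n (as i)

theorem mark_rename (n : ℕ) (D : DT) (ρ : ℕ → ℕ) :
    (D.rename ρ).mark n = (D.mark n).rename ρ := by
  induction D generalizing ρ with
  | var i => rfl
  | app u v hu hv => simp only [rename, mark, Lam.rename, hu, hv]
  | abs u hu => simp only [rename_abs, mark, Lam.rename_abs, hu]
  | box s as ih =>
    simp only [rename, mark, Lam.subst_rename, ih]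
    rfl

theorem mark_comp_liftSub (n : ℕ) (σ : ℕ → DT) :
    mark n ∘ liftSub σ = Lam.liftSub (mark n ∘ σ) := by
  rw [liftSub_eq_scons, Lam.liftSub_eq_scons, comp_scons]
  congr 1
  funext i
  exact mark_rename n (σ i) _

theorem mark_subst (n : ℕ) (D : DT) (σ : ℕ → DT) :
    (D.subst σ).mark n = (D.mark n).subst (mark n ∘ σ) := by
  induction D generalizing σ with
  | var i => rfl
  | app u v hu hv => simp only [subst, mark, Lam.subst, hu, hv]
  | abs u hu => simp only [subst, mark, Lam.subst, hu, mark_comp_liftSub]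
  | box s as ih =>
    simp only [subst, mark, Lam.subst_subst, ih]
    rfl

theorem mark_subst0 (n : ℕ) (u v : DT) :
    (u.subst0 v).mark n = (u.mark n).subst0 (v.mark n) := by
  rw [subst0_eq_subst_scons, mark_subst, comp_scons]
  rfl

theorem mark_toDT (n : ℕ) (M : Lam) : M.toDT.mark n = M := by
  induction M with
  | var i => rfl
  | app u v hu hv => simp only [Lam.toDT, mark, hu, hv]
  | abs u hu => simp only [Lam.toDT, mark, hu]

theorem mark_box (n : ℕ) (s : Lam) (as : ℕ → DT) :
    (box s as).mark n = .app (Lam.marker n) ((contract s as).mark n) := by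
  cases s with
  | abs u =>
    simp only [mark, Lam.mark, Lam.subst, Lam.marker_subst, contract_abs]
    congr 3
    exact (mark_comp_liftSub n as).symm
  | _ =>
    simp only [mark, Lam.mark, Lam.subst, Lam.marker_subst]
    rfl

theorem mark_applyToBox (n : ℕ) (T t : Lam) :
    (applyToBox T t).mark n = .app (.app T (t.mark n)) (.var 0) := by
  simp only [applyToBox, mark, mark_toDT]
  congr 2
  exact Lam.subst_var _

theorem WeakHead.transGen_mark {D E : DT} (h : WeakHead D E) (n : ℕ) :
    TransGen Lam.WeakHead (D.mark n) (E.mark n) := by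
  induction h with
  | beta u v =>
    rw [mark_subst0]
    exact .single (.beta _ _)
  | box s as =>
    rw [mark_box]
    exact Lam.transGen_weakHead_app_marker n _
  | appL v _ ih =>
    exact TransGen.lift (Lam.app · (v.mark n)) (fun _ _ => Lam.WeakHead.appL _) _ _ ih

theorem WeakHeadRed.mark {D E : DT} (h : WeakHeadRed D E) (n : ℕ) :
    Lam.WeakHeadRed (D.mark n) (E.mark n) :=
  ReflTransGen.lift' (DT.mark n) (fun _ _ h => (h.transGen_mark n).to_reflTransGen) _ _ h

theorem not_weakHead_mark {D : DT} (hD : ∀ E, ¬ WeakHead D E) (n : ℕ) (M : Lam) :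
    ¬ Lam.WeakHead (D.mark n) M := by
  induction D generalizing M with
  | var i => exact nofun
  | abs u _ => exact nofun
  | box s as _ => exact absurd (.box s as) (hD _)
  | app u v hu _ =>
    intro hM
    have hu_mark := hu fun E hE => hD _ (.appL v hE)
    cases u with
    | abs u => exact hD _ (.beta u v)
    | box s as => exact hD _ (.appL v (.box s as))
    | var i =>
      cases hM with | appL _ h => exact hu_mark _ h
    | app u w =>
      cases hM with | appL _ h => exact hu_mark _ h

theorem exists_eq_app_var_of_mark_eq {D : DT} (hD : ∀ E, ¬ WeakHead D E) {n i : ℕ} {M : Lam}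
    (h : D.mark n = .app (.var i) M) : ∃ E, D = app (var i) E ∧ E.mark n = M := by
  cases D with
  | var i => cases h
  | abs u => cases h
  | box s as => exact absurd (.box s as) (hD _)
  | app u v =>
    obtain ⟨hu, hv⟩ := Lam.app.inj h
    cases u with
    | var i =>
      cases hu
      exact ⟨v, rfl, hv⟩
    | abs u => cases hu
    | app u w => cases hu
    | box s as => exact absurd (.appL v (.box s as)) (hD _)

end DT

/-! ### From storage to directed reduction -/

theorem Subterm.trans {r s t : Lam} (hrs : Subterm r s) (hst : Subterm s t) : Subterm r t := by
  induction hst with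
  | refl => exact hrs
  | appL v _ ih => exact .appL v (ih hrs)
  | appR u _ ih => exact .appR u (ih hrs)
  | abs _ ih => exact .abs (ih hrs)

namespace DT

/-- `Regular t k D`: below `k` binders, `D` has no other free variable than `f`, which has the index
`k` there, and its boxes are directed by subterms of `t` and do not mention the `k` bound variables,
so that `D` is an instance of a λ-term. The entries of a box that its director does not use are
arbitrary. -/
inductive Regular (t : Lam) : ℕ → DT → Prop
  | var {k i} : i ≤ k → Regular t k (var i)
  | app {k u v} : Regular t k u → Regular t k v → Regular t k (app u v)
  | abs {k u} : Regular t (k + 1) u → Regular t k (abs u)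
  | box {k m s as bs} : Subterm s t → s.ClosedUnder m → (∀ i < m, Regular t 0 (bs i)) →
      as = rename (· + k) ∘ bs → Regular t k (box s as)

variable {t : Lam}

theorem Regular.rename {k k' : ℕ} {D : DT} (h : Regular t k D) {ρ : ℕ → ℕ}
    (hbound : ∀ i < k, ρ i < k') (hfree : ∀ i, ρ (i + k) = i + k') :
    Regular t k' (D.rename ρ) := by
  induction h generalizing k' ρ with
  | @var k i hi =>
    obtain hi | rfl := hi.lt_or_eq
    · exact .var (hbound i hi).le
    · exact .var (by simpa using (hfree 0).le)
  | app _ _ hu hv => exact .app (hu hbound hfree) (hv hbound hfree)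
  | @abs k u _ hu =>
    refine .abs (hu (ρ := up ρ) ?_ fun i => congrArg (· + 1) (hfree i))
    rintro (_ | i) hi
    · exact Nat.succ_pos k'
    · exact Nat.succ_lt_succ (hbound i (Nat.lt_of_succ_lt_succ hi))
  | box hs hm hb has _ =>
    refine .box hs hm hb (funext fun i => ?_)
    rw [has, Function.comp_apply, rename_rename]
    exact congrArg (DT.rename · _) (funext hfree)

theorem Regular.subst {k k' : ℕ} {D : DT} (h : Regular t k D) {σ : ℕ → DT}
    (hbound : ∀ i < k, Regular t k' (σ i)) (hfree : ∀ i, σ (i + k) = DT.var (i + k')) :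
    Regular t k' (D.subst σ) := by
  induction h generalizing k' σ with
  | @var k i hi =>
    obtain hi | rfl := hi.lt_or_eq
    · exact hbound i hi
    · have hi := hfree 0
      rw [zero_add, zero_add] at hi
      rw [DT.subst, hi]
      exact .var le_rfl
  | app _ _ hu hv => exact .app (hu hbound hfree) (hv hbound hfree)
  | @abs k u _ hu =>
    refine .abs (hu ?_ fun i => congrArg (DT.rename (· + 1)) (hfree i))
    rintro (_ | i) hi
    · exact .var (Nat.zero_le _)
    · exact (hbound i (Nat.lt_of_succ_lt_succ hi)).rename (fun _ => Nat.succ_lt_succ)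
        fun _ => rfl
  | box hs hm hb has _ =>
    refine .box hs hm hb (funext fun i => ?_)
    rw [has, Function.comp_apply, rename_subst, Function.comp_apply, rename_eq_subst]
    exact congrArg (DT.subst · _) (funext hfree)

theorem Regular.toDT {k : ℕ} {M : Lam} (h : M.ClosedUnder k) : Regular t k M.toDT := by
  induction M generalizing k with
  | var i => exact .var (le_of_lt h)
  | app u v hu hv => exact .app (hu h.1) (hv h.2)
  | abs u hu => exact .abs (hu h)

/-- The shape of the weak head reducts of `(T)[t]f`: regular, except that the box of an abstraction
which has just been contracted does mention the bound variable. The latter is substituted by the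
next step, as the abstraction is in head position. -/
inductive HeadRegular (t : Lam) : DT → Prop
  | regular {D} : Regular t 0 D → HeadRegular t D
  | abs_box {m u bs} : Subterm u t → u.ClosedUnder (m + 1) → (∀ i < m, Regular t 0 (bs i)) →
      HeadRegular t (abs (box u (liftSub bs)))
  | app {D E} : HeadRegular t D → Regular t 0 E → HeadRegular t (DT.app D E)

theorem HeadRegular.app_inv {D E : DT} (h : HeadRegular t (DT.app D E)) :
    HeadRegular t D ∧ Regular t 0 E := by
  cases h with
  | regular h =>
    cases h with | app hD hE =>
    exact ⟨.regular hD, hE⟩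
  | app hD hE => exact ⟨hD, hE⟩

theorem HeadRegular.subst0 {u v : DT} (hu : HeadRegular t (abs u)) (hv : Regular t 0 v) :
    Regular t 0 (u.subst0 v) := by
  rw [subst0_eq_subst_scons]
  cases hu with
  | regular hu =>
    cases hu with | abs hu =>
    refine hu.subst (fun i hi => ?_) fun _ => rfl
    obtain rfl := Nat.lt_one_iff.1 hi
    exact hv
  | @abs_box m u bs hs hm hb =>
    have hbs : (fun i => (liftSub bs i).subst (scons v var)) = scons v bs := by
      funext i
      cases i with
      | zero => rfl
      | succ i => exact (rename_subst _ _ _).trans (subst_var _)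
    rw [DT.subst, hbs]
    refine .box hs hm ?_ (funext fun i => (rename_zero _).symm)
    rintro (_ | i) hi
    · exact hv
    · exact hb i (Nat.lt_of_succ_lt_succ hi)

theorem HeadRegular.contract {s : Lam} {as : ℕ → DT} (h : HeadRegular t (box s as)) :
    HeadRegular t (contract s as) := by
  cases h with | regular h =>
  cases h with | @box _ m _ _ bs hs hm hb has =>
  obtain rfl : as = bs := has.trans (funext fun i => rename_zero _)
  cases s with
  | var i => exact .regular (hb i hm)
  | app u v =>
    exact .regular (.app (.box (.trans (.appL v (.refl u)) hs) hm.1 hb has)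
      (.box (.trans (.appR u (.refl v)) hs) hm.2 hb has))
  | abs u => exact .abs_box (.trans (.abs (.refl u)) hs) hm hb

theorem HeadRegular.of_weakHead {D E : DT} (hD : HeadRegular t D) (h : WeakHead D E) :
    HeadRegular t E := by
  induction h with
  | beta u v => exact .regular (hD.app_inv.1.subst0 hD.app_inv.2)
  | box s as => exact hD.contract
  | appL v _ ih => exact .app (ih hD.app_inv.1) hD.app_inv.2

theorem HeadRegular.of_weakHeadRed {D E : DT} (hD : HeadRegular t D) (h : WeakHeadRed D E) :
    HeadRegular t E := by
  induction h with
  | refl => exact hD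
  | tail _ h ih => exact ih.of_weakHead h

theorem HeadRegular.applyToBox {T : Lam} (hT : T.Closed) (ht : t.Closed) :
    HeadRegular t (applyToBox T t) :=
  have hbox : Regular t 0 (box t var) :=
    .box (bs := var) (.refl t) ht (fun _ h => absurd h (Nat.not_lt_zero _)) rfl
  .regular (.app (.app (.toDT hT) hbox) (.var le_rfl))

theorem Regular.exists_eq_toDT_subst {k : ℕ} {D : DT} (h : Regular t k D) :
    ∃ (τ : Lam) (σ : ℕ → DT), (∀ i, ∃ s as, Subterm s t ∧ σ i = DT.box s as) ∧
      D = τ.toDT.subst (liftSub^[k] (scons (DT.var 0) σ)) := by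
  induction h with
  | @var k i hi =>
    refine ⟨.var i, fun _ => .box t .var, fun _ => ⟨t, _, .refl t, rfl⟩, ?_⟩
    obtain hi | rfl := hi.lt_or_eq
    · exact (iterate_liftSub_of_lt _ hi).symm
    · have hf := iterate_liftSub_add (scons (DT.var 0) fun _ => DT.box t DT.var) 0 i
      rw [zero_add] at hf
      rw [Lam.toDT, DT.subst, hf, scons, DT.rename, zero_add]
  | @app k u v _ _ hu hv =>
    obtain ⟨τu, σu, hσu, rfl⟩ := hu
    obtain ⟨τv, σv, hσv, rfl⟩ := hv
    refine ⟨.app (τu.rename (up^[k] (up (2 * ·)))) (τv.rename (up^[k] (up (2 * · + 1)))),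
      interleave σu σv,
      forall_interleave (p := fun D => ∃ s as, Subterm s t ∧ D = DT.box s as) hσu hσv, ?_⟩
    simp only [Lam.toDT, DT.subst, toDT_rename_subst, iterate_liftSub_comp_iterate_up,
      scons_comp_up, interleave_comp_even, interleave_comp_odd]
  | abs _ hu =>
    obtain ⟨τ, σ, hσ, rfl⟩ := hu
    exact ⟨.abs τ, σ, hσ, by rw [Lam.toDT, DT.subst, Function.iterate_succ_apply']⟩
  | @box k _ s as bs hs _ _ has _ =>
    refine ⟨.var (1 + k), fun _ => .box s bs, fun _ => ⟨s, bs, hs, rfl⟩, ?_⟩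
    rw [has]
    exact (iterate_liftSub_add (scons (DT.var 0) fun _ => DT.box s bs) 1 k).symm

theorem exists_weakHeadRed_of_isStorageFor {T : Lam} (h : T.IsStorageFor t) :
    ∃ (D : DT) (τ₀ : Lam), WeakHeadRed (applyToBox T t) (app (var 0) D) ∧ τ₀.BetaEq t ∧
      ∀ n, ∃ σ₀, D.mark n = τ₀.subst σ₀ := by
  obtain ⟨-, τ₀, hτ₀, hstore⟩ := h
  have hirred (M N : Lam) : ¬ Lam.WeakHead (.app (.var 0) M) N := by
    rintro (_ | ⟨_, ⟨⟩⟩)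
  have hmark (n : ℕ) : ∃ σ₀ : ℕ → Lam,
      Lam.WeakHeadRed ((applyToBox T t).mark n) (.app (.var 0) (τ₀.subst σ₀)) := by
    obtain ⟨σ₀, -, hred⟩ := hstore _ (Lam.mark_betaEq n t)
    exact ⟨σ₀, mark_applyToBox n T t ▸ hred.weakHeadRed id⟩
  obtain ⟨E, hE, hE_irred⟩ : ∃ E, WeakHeadRed (applyToBox T t) E ∧ ∀ F, ¬ WeakHead E F := by
    obtain ⟨σ₀, hσ₀⟩ := hmark 0
    exact exists_irreducible_of_acc_map (mark 0) (fun _ _ h => h.transGen_mark 0)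
      (acc_swap_of_rightUnique Lam.WeakHead.rightUnique hσ₀ (hirred _))
  have hE_mark (n : ℕ) : ∃ σ₀ : ℕ → Lam, E.mark n = .app (.var 0) (τ₀.subst σ₀) := by
    obtain ⟨σ₀, hσ₀⟩ := hmark n
    exact ⟨σ₀, eq_of_reflTransGen_of_rightUnique Lam.WeakHead.rightUnique (hE.mark n) hσ₀
      (not_weakHead_mark hE_irred n) (hirred _)⟩
  obtain ⟨σ₀, hσ₀⟩ := hE_mark 0
  obtain ⟨D, rfl, -⟩ := exists_eq_app_var_of_mark_eq hE_irred hσ₀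
  exact ⟨D, τ₀, hE, hτ₀, fun n => (hE_mark n).imp fun _ h => (Lam.app.inj h).2⟩

theorem betaEq_of_forall_mark_eq_subst (ht : t.Closed) (hnt : t.Normal) {τ τ₀ : Lam} {σ : ℕ → DT}
    (hτ₀ : τ₀.BetaEq t) (hσ : ∀ i, (∃ j, σ i = var j) ∨ ∃ s as, σ i = box s as)
    (h : ∀ n, ∃ σ₀, (τ.toDT.subst σ).mark n = τ₀.subst σ₀) : τ.BetaEq t := by
  let n := sizeOf τ + sizeOf τ₀
  obtain ⟨σ₀, hmark⟩ := h n
  rw [mark_subst, mark_toDT] at hmark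
  have herase := congrArg (Lam.eraseMarkers n 0) hmark
  rw [Lam.eraseMarkers_subst (Nat.le_add_right _ _),
    Lam.eraseMarkers_subst (Nat.le_add_left _ _)] at herase
  have hvar (i : ℕ) : ∃ j, ((σ i).mark n |>.eraseMarkers n 0).BetaEq (.var j) := by
    obtain ⟨j, hj⟩ | ⟨s, as, hbox⟩ := hσ i
    · exact ⟨j, hj ▸ .refl _⟩
    · rw [hbox, mark_box]
      exact ⟨0, Lam.eraseMarkers_app_marker_betaEq n 0 _⟩
  choose ρ hρ using hvar
  have hτ_rename : (τ.rename ρ).BetaEq t := by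
    have hτ₀_subst := hτ₀.subst (Lam.eraseMarkers n 0 ∘ σ₀)
    rw [ht.subst_eq_self, ← herase] at hτ₀_subst
    rw [Lam.rename_eq_subst]
    exact (Lam.BetaEq.subst_congr τ hρ).symm.trans hτ₀_subst
  exact ((hτ_rename.betaRed_of_normal hnt).of_rename ht).betaEq

end DT

open Lam DT in
/-- Characterization of storage operators via the directed λ-calculus :
`T` is a storage operator for the closed normal term `t` iff there is a
`τ ≃β t` such that `(T)[t]f` `β[□]`-head reduces to
`(f)τ[[t₁]⟨a̅₁/x̅₁⟩/y₁, …, [tₘ]⟨a̅ₘ/x̅ₘ⟩/yₘ]`, where the `tᵢ` are subterms of `t`. -/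
theorem stmt7 (t T : Lam) (ht : Closed t) (hnt : Normal t) (hT : Closed T) :
    IsStorageFor T t ↔
      ∃ τ : Lam, BetaEq τ t ∧
        ∃ σ : ℕ → DT,
          σ 0 = DT.var 0 ∧
          (∀ i : ℕ, σ i = DT.var i ∨
            ∃ (s : Lam) (as : ℕ → DT), Subterm s t ∧ σ i = DT.box s as) ∧
          DHeadRed (DT.app (DT.app T.toDT (DT.box t DT.var)) (DT.var 0))
            (DT.app (DT.var 0) (τ.toDT.subst σ)) := by
  constructor
  · intro h
    obtain ⟨D, τ₀, hred, hτ₀, hmark⟩ := exists_weakHeadRed_of_isStorageFor h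
    have hregular : Regular t 0 D :=
      ((HeadRegular.applyToBox hT ht).of_weakHeadRed hred).app_inv.2
    obtain ⟨τ, σ, hσ, rfl⟩ := hregular.exists_eq_toDT_subst
    refine ⟨τ, betaEq_of_forall_mark_eq_subst ht hnt hτ₀ ?_ hmark, scons (.var 0) σ, rfl, ?_,
      hred.dHeadRed⟩
    · rintro (_ | i)
      · exact .inl ⟨0, rfl⟩
      · obtain ⟨s, as, -, hbox⟩ := hσ i
        exact .inr ⟨s, as, hbox⟩
    · rintro (_ | i)
      · exact .inl rfl
      · exact .inr (hσ i)
  · rintro ⟨τ, hτ, σ, -, -, hred⟩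
    exact isStorageFor_of_weakHeadRed ht hnt hT hτ (hred.weakHeadRed id)
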